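/- arXiv:1810.01324 — 3 statements merged into one kernel-verified Lean document; each statement's English description precedes it below -/
import Mathlib

section
/- For every smooth function f : ℝ^d × ℝ^d → ℝ and every point (x,v), one has the pointwise lower bound Γ₂(f)(x,v) ≥ ‖∇_x f(x,v)‖² − (14 + 8M² + 2M)‖∇_v f(x,v)‖². -/
open scoped RealInnerProductSpace

noncomputable section

/-- The gradient in the `x` (position) variable of a function on `ℝ^d × ℝ^d`. -/
def gradx {d : ℕ} (f : EuclideanSpace ℝ (Fin d) × EuclideanSpace ℝ (Fin d) → ℝ)
    (z : EuclideanSpace ℝ (Fin d) × EuclideanSpace ℝ (Fin d)) : EuclideanSpace ℝ (Fin d) :=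
  gradient (fun x => f (x, z.2)) z.1

/-- The gradient in the `v` (velocity) variable of a function on `ℝ^d × ℝ^d`. -/
def gradv {d : ℕ} (f : EuclideanSpace ℝ (Fin d) × EuclideanSpace ℝ (Fin d) → ℝ)
    (z : EuclideanSpace ℝ (Fin d) × EuclideanSpace ℝ (Fin d)) : EuclideanSpace ℝ (Fin d) :=
  gradient (fun v => f (z.1, v)) z.2

/-- The Laplacian in the `v` (velocity) variable of a function on `ℝ^d × ℝ^d`. -/
def lapv {d : ℕ} (f : EuclideanSpace ℝ (Fin d) × EuclideanSpace ℝ (Fin d) → ℝ)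
    (z : EuclideanSpace ℝ (Fin d) × EuclideanSpace ℝ (Fin d)) : ℝ :=
  ∑ i : Fin d,
    fderiv ℝ (fun v => fderiv ℝ (fun v' => f (z.1, v')) v (EuclideanSpace.single i 1)) z.2
      (EuclideanSpace.single i 1)

/-- The kinetic Fokker–Planck generator
`L f = Δ_v f + v·∇_x f − v·∇_v f − ∇_x U(x)·∇_v f`. -/
def genL {d : ℕ} (U : EuclideanSpace ℝ (Fin d) → ℝ)
    (f : EuclideanSpace ℝ (Fin d) × EuclideanSpace ℝ (Fin d) → ℝ)
    (z : EuclideanSpace ℝ (Fin d) × EuclideanSpace ℝ (Fin d)) : ℝ :=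
  lapv f z + ⟪z.2, gradx f z⟫ - ⟪z.2, gradv f z⟫ - ⟪gradient U z.1, gradv f z⟫

/-- The carré du champ
`Γ(f,g) = 2 ∇_x f·∇_x g − ∇_x f·∇_v g − ∇_v f·∇_x g + 2 ∇_v f·∇_v g`. -/
def carre {d : ℕ} (f g : EuclideanSpace ℝ (Fin d) × EuclideanSpace ℝ (Fin d) → ℝ)
    (z : EuclideanSpace ℝ (Fin d) × EuclideanSpace ℝ (Fin d)) : ℝ :=
  2 * ⟪gradx f z, gradx g z⟫ - ⟪gradx f z, gradv g z⟫ - ⟪gradv f z, gradx g z⟫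
    + 2 * ⟪gradv f z, gradv g z⟫

/-- `Γ₂(f) = L Γ(f,f) − 2 Γ(f, L f)`. -/
def carre2 {d : ℕ} (U : EuclideanSpace ℝ (Fin d) → ℝ)
    (f : EuclideanSpace ℝ (Fin d) × EuclideanSpace ℝ (Fin d) → ℝ)
    (z : EuclideanSpace ℝ (Fin d) × EuclideanSpace ℝ (Fin d)) : ℝ :=
  genL U (carre f f) z - 2 * carre f (genL U f) z

section Helpers

variable {d : ℕ}

local notation "EE" => EuclideanSpace ℝ (Fin d)

/-- directional derivative -/
def DD (w : EE × EE) (g : EE × EE → ℝ) (z : EE × EE) : ℝ := fderiv ℝ g z w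

def eX (i : Fin d) : EE × EE := (EuclideanSpace.single i 1, 0)

def eV (i : Fin d) : EE × EE := (0, EuclideanSpace.single i 1)

/-- the drift vector field -/
def drift (U : EE → ℝ) (z : EE × EE) : EE × EE := (z.2, -z.2 - gradient U z.1)

def LL (U : EE → ℝ) (g : EE × EE → ℝ) (z : EE × EE) : ℝ :=
  (∑ i, DD (eV i) (DD (eV i) g) z) + fderiv ℝ g z (drift U z)

theorem DD_smooth (w : EE × EE) {g : EE × EE → ℝ} (hg : ContDiff ℝ (⊤ : ℕ∞) g) :
    ContDiff ℝ (⊤ : ℕ∞) (DD w g) := by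
  unfold DD
  exact (hg.fderiv_right (m := (⊤ : ℕ∞)) (by simp)).clm_apply contDiff_const

theorem grad_smooth {U : EE → ℝ} (hU : ContDiff ℝ (⊤ : ℕ∞) U) :
    ContDiff ℝ (⊤ : ℕ∞) (gradient U) := by
  unfold gradient
  exact (InnerProductSpace.toDual ℝ EE).symm.contDiff.comp
    (hU.fderiv_right (m := (⊤ : ℕ∞)) (by simp))

theorem drift_smooth {U : EE → ℝ} (hU : ContDiff ℝ (⊤ : ℕ∞) U) :
    ContDiff ℝ (⊤ : ℕ∞) (drift U) := by
  unfold drift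
  exact contDiff_snd.prodMk (contDiff_snd.neg.sub ((grad_smooth hU).comp contDiff_fst))

theorem smooth_diff {F G : Type*} [NormedAddCommGroup F] [NormedSpace ℝ F]
    [NormedAddCommGroup G] [NormedSpace ℝ G] {g : F → G} (hg : ContDiff ℝ (⊤ : ℕ∞) g) :
    Differentiable ℝ g := hg.differentiable (by simp)

theorem LL_smooth {U : EE → ℝ} (hU : ContDiff ℝ (⊤ : ℕ∞) U) {g : EE × EE → ℝ}
    (hg : ContDiff ℝ (⊤ : ℕ∞) g) : ContDiff ℝ (⊤ : ℕ∞) (LL U g) := by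
  unfold LL
  exact (ContDiff.sum fun i _ => DD_smooth _ (DD_smooth _ hg)).add
    ((hg.fderiv_right (m := (⊤ : ℕ∞)) (by simp)).clm_apply (drift_smooth hU))

theorem fderiv_slice_v {g : EE × EE → ℝ} (hg : Differentiable ℝ g) (x v w : EE) :
    fderiv ℝ (fun v' => g (x, v')) v w = fderiv ℝ g (x, v) (0, w) := by
  have h := (hg (x, v)).hasFDerivAt.comp v (hasFDerivAt_prodMk_right x v)
  have h2 := h.fderiv
  change fderiv ℝ (g ∘ fun v' => (x, v')) v w = _
  rw [h2]; simp

theorem fderiv_slice_x {g : EE × EE → ℝ} (hg : Differentiable ℝ g) (x v w : EE) :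
    fderiv ℝ (fun x' => g (x', v)) x w = fderiv ℝ g (x, v) (w, 0) := by
  have h := HasFDerivAt.comp (f := fun x' : EE => (x', v)) x (hg (x, v)).hasFDerivAt
    (hasFDerivAt_prodMk_left x v)
  have h2 := h.fderiv
  change fderiv ℝ (g ∘ fun x' => (x', v)) x w = _
  rw [h2]; simp

theorem inner_gradv {g : EE × EE → ℝ} (hg : Differentiable ℝ g) (z : EE × EE) (w : EE) :
    ⟪gradv g z, w⟫ = fderiv ℝ g z (0, w) := by
  unfold gradv
  rw [gradient, InnerProductSpace.toDual_symm_apply, fderiv_slice_v hg]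

theorem inner_gradx {g : EE × EE → ℝ} (hg : Differentiable ℝ g) (z : EE × EE) (w : EE) :
    ⟪gradx g z, w⟫ = fderiv ℝ g z (w, 0) := by
  unfold gradx
  rw [gradient, InnerProductSpace.toDual_symm_apply, fderiv_slice_x hg]

theorem gradv_apply {g : EE × EE → ℝ} (hg : Differentiable ℝ g) (z : EE × EE) (i : Fin d) :
    gradv g z i = DD (eV i) g z := by
  have := inner_gradv hg z (EuclideanSpace.single i 1)
  rw [EuclideanSpace.inner_single_right] at this
  simpa [DD, eV] using this

theorem gradx_apply {g : EE × EE → ℝ} (hg : Differentiable ℝ g) (z : EE × EE) (i : Fin d) :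
    gradx g z i = DD (eX i) g z := by
  have := inner_gradx hg z (EuclideanSpace.single i 1)
  rw [EuclideanSpace.inner_single_right] at this
  simpa [DD, eX] using this

theorem lapv_eq {g : EE × EE → ℝ} (hg : ContDiff ℝ (⊤ : ℕ∞) g) (z : EE × EE) :
    lapv g z = ∑ i, DD (eV i) (DD (eV i) g) z := by
  unfold lapv
  refine Finset.sum_congr rfl fun i _ => ?_
  have h1 : (fun v => fderiv ℝ (fun v' => g (z.1, v')) v (EuclideanSpace.single i 1))
      = fun v => DD (eV i) g (z.1, v) := by
    funext v; rw [fderiv_slice_v (smooth_diff hg)]; rfl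
  rw [h1, fderiv_slice_v (smooth_diff (DD_smooth _ hg))]; rfl

theorem genL_eq (U : EE → ℝ) {g : EE × EE → ℝ} (hg : ContDiff ℝ (⊤ : ℕ∞) g) :
    genL U g = LL U g := by
  funext z
  unfold genL LL drift
  rw [lapv_eq hg, real_inner_comm, inner_gradx (smooth_diff hg), real_inner_comm,
    inner_gradv (smooth_diff hg), real_inner_comm, inner_gradv (smooth_diff hg)]
  have : ((z.2, -z.2 - gradient U z.1) : EE × EE)
      = (z.2, 0) - (0, z.2) - (0, gradient U z.1) := by
    ext <;> simp
  rw [this, map_sub, map_sub]; ring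

theorem inner_eq_sum (a b : EE) : ⟪a, b⟫ = ∑ i, a i * b i := by
  simp [PiLp.inner_apply, mul_comm]

theorem carre_eq {f g : EE × EE → ℝ} (hf : ContDiff ℝ (⊤ : ℕ∞) f)
    (hg : ContDiff ℝ (⊤ : ℕ∞) g) :
    carre f g = fun z => ∑ i, (2 * (DD (eX i) f z * DD (eX i) g z)
      - DD (eX i) f z * DD (eV i) g z - DD (eV i) f z * DD (eX i) g z
      + 2 * (DD (eV i) f z * DD (eV i) g z)) := by
  funext z
  unfold carre
  simp only [inner_eq_sum, gradx_apply (smooth_diff hf), gradv_apply (smooth_diff hf),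
    gradx_apply (smooth_diff hg), gradv_apply (smooth_diff hg), Finset.sum_add_distrib,
    Finset.sum_sub_distrib, Finset.mul_sum]

theorem DD_comm {g : EE × EE → ℝ} (hg : ContDiff ℝ (⊤ : ℕ∞) g) (u w z : EE × EE) :
    DD u (DD w g) z = fderiv ℝ (fderiv ℝ g) z u w := by
  have hd : DifferentiableAt ℝ (fderiv ℝ g) z :=
    smooth_diff (hg.fderiv_right (m := (⊤ : ℕ∞)) (by simp)) z
  unfold DD
  rw [fderiv_clm_apply hd (differentiableAt_const _)]
  simp

theorem DD_symm {g : EE × EE → ℝ} (hg : ContDiff ℝ (⊤ : ℕ∞) g) (u w : EE × EE) :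
    DD u (DD w g) = DD w (DD u g) := by
  funext z
  rw [DD_comm hg, DD_comm hg]
  exact (hg.contDiffAt.isSymmSndFDerivAt (by
    simp only [minSmoothness_of_isRCLikeNormedField]; exact WithTop.coe_le_coe.2 (le_top : (2 : ℕ∞) ≤ ⊤))).eq u w

theorem DD_LL {U : EE → ℝ} (hU : ContDiff ℝ (⊤ : ℕ∞) U) {g : EE × EE → ℝ}
    (hg : ContDiff ℝ (⊤ : ℕ∞) g) (w z : EE × EE) :
    DD w (LL U g) z = LL U (DD w g) z
      + fderiv ℝ g z (w.2, -w.2 - fderiv ℝ (gradient U) z.1 w.1) := by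
  have hfg : ContDiff ℝ (⊤ : ℕ∞) (fderiv ℝ g) := hg.fderiv_right (by simp)
  have hdr : HasFDerivAt (drift U) ((ContinuousLinearMap.snd ℝ EE EE).prod
      (-(ContinuousLinearMap.snd ℝ EE EE)
        - (fderiv ℝ (gradient U) z.1).comp (ContinuousLinearMap.fst ℝ EE EE))) z := by
    have h1 : HasFDerivAt (gradient U) (fderiv ℝ (gradient U) z.1) z.1 :=
      (smooth_diff (grad_smooth hU) z.1).hasFDerivAt
    exact hasFDerivAt_snd.prodMk (hasFDerivAt_snd.neg.sub (h1.comp z hasFDerivAt_fst))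
  have h2 : HasFDerivAt (fun z => ∑ i, DD (eV i) (DD (eV i) g) z)
      (∑ i, fderiv ℝ (DD (eV i) (DD (eV i) g)) z) z :=
    HasFDerivAt.fun_sum fun i _ =>
      (smooth_diff (DD_smooth _ (DD_smooth _ hg)) z).hasFDerivAt
  have h3 := h2.add ((smooth_diff hfg z).hasFDerivAt.clm_apply hdr)
  have h4 : fderiv ℝ (LL U g) z = _ := h3.fderiv
  have h5 : ∀ i, fderiv ℝ (DD (eV i) (DD (eV i) g)) z w
      = DD (eV i) (DD (eV i) (DD w g)) z := by
    intro i
    change DD w (DD (eV i) (DD (eV i) g)) z = _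
    rw [DD_symm (DD_smooth _ hg) w, DD_symm hg w]
  have h6 : fderiv ℝ (DD w g) z (drift U z) = fderiv ℝ (fderiv ℝ g) z w (drift U z) := by
    rw [← DD_comm hg, DD_symm hg]; rfl
  rw [DD, h4, LL, h6]
  simp [h5]
  ring

theorem DD_mul {g h : EE × EE → ℝ} (hg : ContDiff ℝ (⊤ : ℕ∞) g)
    (hh : ContDiff ℝ (⊤ : ℕ∞) h) (w : EE × EE) :
    DD w (fun z => g z * h z) = fun z => g z * DD w h z + h z * DD w g z := by
  funext z
  unfold DD
  rw [fderiv_fun_mul (smooth_diff hg z) (smooth_diff hh z)]; simp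

theorem DD_add {g h : EE × EE → ℝ} (hg : ContDiff ℝ (⊤ : ℕ∞) g)
    (hh : ContDiff ℝ (⊤ : ℕ∞) h) (w : EE × EE) :
    DD w (fun z => g z + h z) = fun z => DD w g z + DD w h z := by
  funext z
  unfold DD
  rw [fderiv_fun_add (smooth_diff hg z) (smooth_diff hh z)]; simp

theorem DD_smul {g : EE × EE → ℝ} (hg : ContDiff ℝ (⊤ : ℕ∞) g) (c : ℝ) (w : EE × EE) :
    DD w (fun z => c * g z) = fun z => c * DD w g z := by
  funext z
  unfold DD
  rw [fderiv_const_mul (smooth_diff hg z)]; simp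

theorem DD_sum {g : Fin d → EE × EE → ℝ} (hg : ∀ i, ContDiff ℝ (⊤ : ℕ∞) (g i))
    (w : EE × EE) :
    DD w (fun z => ∑ i, g i z) = fun z => ∑ i, DD w (g i) z := by
  funext z
  unfold DD
  rw [fderiv_fun_sum fun i _ => smooth_diff (hg i) z]; simp

theorem LL_mul (U : EE → ℝ) {g h : EE × EE → ℝ} (hg : ContDiff ℝ (⊤ : ℕ∞) g)
    (hh : ContDiff ℝ (⊤ : ℕ∞) h) (z : EE × EE) :
    LL U (fun z => g z * h z) z = g z * LL U h z + h z * LL U g z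
      + 2 * ∑ j, DD (eV j) g z * DD (eV j) h z := by
  have h1 : ∀ j, DD (eV j) (DD (eV j) (fun z => g z * h z)) z
      = g z * DD (eV j) (DD (eV j) h) z + h z * DD (eV j) (DD (eV j) g) z
        + 2 * (DD (eV j) g z * DD (eV j) h z) := by
    intro j
    rw [DD_mul hg hh, DD_add (hg.mul (DD_smooth _ hh)) (hh.mul (DD_smooth _ hg)),
      DD_mul hg (DD_smooth _ hh), DD_mul hh (DD_smooth _ hg)]
    ring
  have h2 : fderiv ℝ (fun z => g z * h z) z (drift U z) = _ :=
    congrFun (DD_mul hg hh (drift U z)) z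
  unfold LL
  rw [h2]
  simp only [h1, Finset.sum_add_distrib, ← Finset.mul_sum]
  unfold DD
  ring

theorem LL_add (U : EE → ℝ) {g h : EE × EE → ℝ} (hg : ContDiff ℝ (⊤ : ℕ∞) g)
    (hh : ContDiff ℝ (⊤ : ℕ∞) h) (z : EE × EE) :
    LL U (fun z => g z + h z) z = LL U g z + LL U h z := by
  have h2 : fderiv ℝ (fun z => g z + h z) z (drift U z) = _ :=
    congrFun (DD_add hg hh (drift U z)) z
  unfold LL
  rw [h2]
  simp only [DD_add hg hh, DD_add (DD_smooth _ hg) (DD_smooth _ hh), Finset.sum_add_distrib]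
  unfold DD
  ring

theorem LL_smul (U : EE → ℝ) {g : EE × EE → ℝ} (hg : ContDiff ℝ (⊤ : ℕ∞) g) (c : ℝ)
    (z : EE × EE) :
    LL U (fun z => c * g z) z = c * LL U g z := by
  have h2 : fderiv ℝ (fun z => c * g z) z (drift U z) = _ :=
    congrFun (DD_smul hg c (drift U z)) z
  unfold LL
  rw [h2]
  simp only [DD_smul hg, DD_smul (DD_smooth _ hg), ← Finset.mul_sum]
  unfold DD
  ring

theorem LL_sum (U : EE → ℝ) {g : Fin d → EE × EE → ℝ}
    (hg : ∀ i, ContDiff ℝ (⊤ : ℕ∞) (g i)) (z : EE × EE) :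
    LL U (fun z => ∑ i, g i z) z = ∑ i, LL U (g i) z := by
  have h2 : fderiv ℝ (fun z => ∑ i, g i z) z (drift U z) = _ :=
    congrFun (DD_sum hg (drift U z)) z
  unfold LL
  rw [h2]
  simp only [DD_sum hg, DD_sum fun i => DD_smooth _ (hg i), Finset.sum_add_distrib]
  rw [Finset.sum_comm]
  rfl

theorem LL_carre (U : EE → ℝ) {f : EE × EE → ℝ} (hf : ContDiff ℝ (⊤ : ℕ∞) f) (z : EE × EE) :
    LL U (carre f f) z = ∑ i, (
      (4 * DD (eX i) f z - 2 * DD (eV i) f z) * LL U (DD (eX i) f) z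
      + (4 * DD (eV i) f z - 2 * DD (eX i) f z) * LL U (DD (eV i) f) z
      + ∑ j, (4 * DD (eV j) (DD (eX i) f) z ^ 2
        - 4 * (DD (eV j) (DD (eX i) f) z * DD (eV j) (DD (eV i) f) z)
        + 4 * DD (eV j) (DD (eV i) f) z ^ 2)) := by
  have hX : ∀ i, ContDiff ℝ (⊤ : ℕ∞) (DD (eX i) f) := fun i => DD_smooth _ hf
  have hV : ∀ i, ContDiff ℝ (⊤ : ℕ∞) (DD (eV i) f) := fun i => DD_smooth _ hf
  have e : carre f f = fun z => ∑ i, ((2 * (DD (eX i) f z * DD (eX i) f z)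
      + (-2) * (DD (eX i) f z * DD (eV i) f z)) + 2 * (DD (eV i) f z * DD (eV i) f z)) := by
    rw [carre_eq hf hf]
    funext z
    refine Finset.sum_congr rfl fun i _ => ?_
    ring
  have s1 : ∀ i, ContDiff ℝ (⊤ : ℕ∞) (fun z => DD (eX i) f z * DD (eX i) f z) :=
    fun i => (hX i).mul (hX i)
  have s2 : ∀ i, ContDiff ℝ (⊤ : ℕ∞) (fun z => DD (eX i) f z * DD (eV i) f z) :=
    fun i => (hX i).mul (hV i)
  have s3 : ∀ i, ContDiff ℝ (⊤ : ℕ∞) (fun z => DD (eV i) f z * DD (eV i) f z) :=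
    fun i => (hV i).mul (hV i)
  have t1 := fun i => contDiff_const (c := (2 : ℝ)).mul (s1 i)
  have t2 := fun i => contDiff_const (c := (-2 : ℝ)).mul (s2 i)
  have t3 := fun i => contDiff_const (c := (2 : ℝ)).mul (s3 i)
  rw [e, LL_sum U fun i => ((t1 i).add (t2 i)).add (t3 i)]
  refine Finset.sum_congr rfl fun i _ => ?_
  rw [LL_add U ((t1 i).add (t2 i)) (t3 i), LL_add U (t1 i) (t2 i), LL_smul U (s1 i),
    LL_smul U (s2 i), LL_smul U (s3 i), LL_mul U (hX i) (hX i), LL_mul U (hX i) (hV i),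
    LL_mul U (hV i) (hV i)]
  simp only [Finset.sum_add_distrib, Finset.sum_sub_distrib, ← Finset.mul_sum, pow_two]
  ring

theorem carre2_ge {U : EE → ℝ} (hU : ContDiff ℝ (⊤ : ℕ∞) U) {f : EE × EE → ℝ}
    (hf : ContDiff ℝ (⊤ : ℕ∞) f) (z : EE × EE) :
    2 * ⟪gradx f z, gradx f z⟫ - 6 * ⟪gradx f z, gradv f z⟫ + 4 * ⟪gradv f z, gradv f z⟫
      + 4 * ⟪gradv f z, fderiv ℝ (gradient U) z.1 (gradx f z)⟫
      - 2 * ⟪gradv f z, fderiv ℝ (gradient U) z.1 (gradv f z)⟫ ≤ carre2 U f z := by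
  have hd := smooth_diff hf
  have hX : ∀ i, DD (eX i) (LL U f) z = LL U (DD (eX i) f) z
      - ⟪gradv f z, fderiv ℝ (gradient U) z.1 (EuclideanSpace.single i 1)⟫ := by
    intro i
    rw [DD_LL hU hf, inner_gradv hd, sub_eq_add_neg (LL U _ z), ← map_neg (fderiv ℝ f z)]
    congr 2
    simp [eX]
  have hV : ∀ i, DD (eV i) (LL U f) z = LL U (DD (eV i) f) z
      + DD (eX i) f z - DD (eV i) f z := by
    intro i
    rw [DD_LL hU hf, add_sub_assoc]
    unfold DD
    rw [← map_sub]
    simp [eX, eV]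
  have hH : ∀ w : EE, ⟪gradv f z, fderiv ℝ (gradient U) z.1 w⟫
      = ∑ i, w i * ⟪gradv f z, fderiv ℝ (gradient U) z.1 (EuclideanSpace.single i 1)⟫ := by
    intro w
    have hw : w = ∑ i, w i • (EuclideanSpace.single i (1 : ℝ) : EE) := by
      ext j
      simp [Finset.sum_apply, Pi.single_apply]
    conv_lhs => rw [hw]
    simp only [map_sum, map_smul, inner_sum, inner_smul_right]
  unfold carre2
  rw [genL_eq U hf, carre_eq hf (LL_smooth hU hf)]
  have hc : ContDiff ℝ (⊤ : ℕ∞) (carre f f) := by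
    rw [carre_eq hf hf]
    have a := fun i : Fin d => DD_smooth (eX i) hf
    have b := fun i : Fin d => DD_smooth (eV i) hf
    exact ContDiff.sum fun i _ => (((contDiff_const.mul ((a i).mul (a i))).sub
      ((a i).mul (b i))).sub ((b i).mul (a i))).add (contDiff_const.mul ((b i).mul (b i)))
  rw [genL_eq U hc, LL_carre U hf, hH (gradx f z), hH (gradv f z)]
  simp only [inner_eq_sum (gradx f z), inner_eq_sum (gradv f z) (gradv f z), gradx_apply hd,
    gradv_apply hd, hX, hV, Finset.mul_sum, ← Finset.sum_add_distrib,
    ← Finset.sum_sub_distrib]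
  refine Finset.sum_le_sum fun i _ => ?_
  have hq : 0 ≤ ∑ j, (4 * DD (eV j) (DD (eX i) f) z ^ 2
        - 4 * (DD (eV j) (DD (eX i) f) z * DD (eV j) (DD (eV i) f) z)
        + 4 * DD (eV j) (DD (eV i) f) z ^ 2) := by
    refine Finset.sum_nonneg fun j _ => ?_
    nlinarith [sq_nonneg (DD (eV j) (DD (eX i) f) z - DD (eV j) (DD (eV i) f) z),
      sq_nonneg (DD (eV j) (DD (eX i) f) z), sq_nonneg (DD (eV j) (DD (eV i) f) z)]
  generalize ⟪gradv f z, fderiv ℝ (gradient U) z.1 (EuclideanSpace.single i 1)⟫ = h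
  linarith

end Helpers

/-- for every smooth `f` and every point `(x,v)`,
`Γ₂(f)(x,v) ≥ ‖∇_x f(x,v)‖² − (14 + 8M² + 2M)‖∇_v f(x,v)‖²`. -/
theorem carre2_lower_bound {d : ℕ} (hd : 1 ≤ d)
    (U : EuclideanSpace ℝ (Fin d) → ℝ) (hU : ContDiff ℝ (⊤ : ℕ∞) U)
    (M : ℝ) (hM : 0 < M)
    (hHess : ∀ x : EuclideanSpace ℝ (Fin d), ‖fderiv ℝ (gradient U) x‖ ≤ M)
    (f : EuclideanSpace ℝ (Fin d) × EuclideanSpace ℝ (Fin d) → ℝ)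
    (hf : ContDiff ℝ (⊤ : ℕ∞) f)
    (z : EuclideanSpace ℝ (Fin d) × EuclideanSpace ℝ (Fin d)) :
    carre2 U f z ≥ ‖gradx f z‖ ^ 2 - (14 + 8 * M ^ 2 + 2 * M) * ‖gradv f z‖ ^ 2 := by
  have h0 := carre2_ge hU hf z
  have hop : ∀ w : EuclideanSpace ℝ (Fin d),
      |⟪gradv f z, fderiv ℝ (gradient U) z.1 w⟫| ≤ ‖gradv f z‖ * (M * ‖w‖) := fun w =>
    (abs_real_inner_le_norm _ _).trans (mul_le_mul_of_nonneg_left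
      ((ContinuousLinearMap.le_opNorm _ _).trans
        (mul_le_mul_of_nonneg_right (hHess _) (norm_nonneg _))) (norm_nonneg _))
  have h1 := (abs_le.1 (hop (gradx f z))).1
  have h2 := (abs_le.1 (hop (gradv f z))).2
  have h3 := (abs_le.1 (abs_real_inner_le_norm (gradx f z) (gradv f z))).2
  rw [real_inner_self_eq_norm_sq, real_inner_self_eq_norm_sq] at h0
  nlinarith [sq_nonneg (‖gradx f z‖ - (3 + 2 * M) * ‖gradv f z‖),
    mul_nonneg (sq_nonneg (2 * M - 3)) (sq_nonneg ‖gradv f z‖)]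

end
end

section
/- Set C_M = 15 + 8M² + 2M and define the modified bilinear form Γ̃(f,g) = Γ(f,g) + C_M f g, with Γ̃(f) = Γ̃(f,f). Then for every smooth function f : ℝ^d × ℝ^d → ℝ one has the pointwise inequality L Γ̃(f) − 2 Γ̃(f, L f) ≥ (1/3)(Γ̃(f) − C_M f²). -/
open scoped RealInnerProductSpace

noncomputable section

/-- The modified carré du champ `Γ̃(f,g) = Γ(f,g) + C_M f g` with `C_M = 15 + 8M² + 2M`. -/
def carreT {d : ℕ} (M : ℝ) (f g : EuclideanSpace ℝ (Fin d) × EuclideanSpace ℝ (Fin d) → ℝ)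
    (z : EuclideanSpace ℝ (Fin d) × EuclideanSpace ℝ (Fin d)) : ℝ :=
  carre f g z + (15 + 8 * M ^ 2 + 2 * M) * (f z * g z)

namespace KFP

open scoped ContDiff

abbrev E (d : ℕ) := EuclideanSpace ℝ (Fin d)

def D {d : ℕ} (w : E d × E d) (f : E d × E d → ℝ) (z : E d × E d) : ℝ := fderiv ℝ f z w

def ex {d : ℕ} (i : Fin d) : E d × E d := (EuclideanSpace.single i 1, 0)
def ev {d : ℕ} (i : Fin d) : E d × E d := (0, EuclideanSpace.single i 1)

abbrev Sm {d : ℕ} (f : E d × E d → ℝ) : Prop := ContDiff ℝ ∞ f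

lemma Sm.diff {d : ℕ} {f : E d × E d → ℝ} (hf : Sm f) (z : E d × E d) :
    DifferentiableAt ℝ f z :=
  (ContDiff.differentiable hf (by simp)) z

lemma Sm.D {d : ℕ} {f : E d × E d → ℝ} (hf : Sm f) (w : E d × E d) : Sm (D w f) := by
  have h : ContDiff ℝ ∞ (fderiv ℝ f) := ContDiff.fderiv_right hf (by simp)
  exact h.clm_apply contDiff_const

lemma D_add {d : ℕ} {f g : E d × E d → ℝ} (hf : Sm f) (hg : Sm g) (w z : E d × E d) :
    D w (fun z => f z + g z) z = D w f z + D w g z := by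
  unfold D
  rw [fderiv_fun_add (hf.diff z) (hg.diff z)]; rfl

lemma D_sub {d : ℕ} {f g : E d × E d → ℝ} (hf : Sm f) (hg : Sm g) (w z : E d × E d) :
    D w (fun z => f z - g z) z = D w f z - D w g z := by
  unfold D
  rw [fderiv_fun_sub (hf.diff z) (hg.diff z)]; rfl

lemma D_mul {d : ℕ} {f g : E d × E d → ℝ} (hf : Sm f) (hg : Sm g) (w z : E d × E d) :
    D w (fun z => f z * g z) z = f z * D w g z + g z * D w f z := by
  unfold D
  rw [fderiv_fun_mul (hf.diff z) (hg.diff z)]; simp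

lemma D_cmul {d : ℕ} {f : E d × E d → ℝ} (hf : Sm f) (c : ℝ) (w z : E d × E d) :
    D w (fun z => c * f z) z = c * D w f z := by
  unfold D
  rw [fderiv_const_mul (hf.diff z)]; simp

lemma D_sum {d : ℕ} {F : Fin d → E d × E d → ℝ} (hF : ∀ i, Sm (F i)) (w z : E d × E d) :
    D w (fun z => ∑ i, F i z) z = ∑ i, D w (F i) z := by
  unfold D
  rw [fderiv_fun_sum (fun i _ => (hF i).diff z)]; simp

lemma D_comm {d : ℕ} {f : E d × E d → ℝ} (hf : Sm f) (w u z : E d × E d) :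
    D w (D u f) z = D u (D w f) z := by
  have h : ContDiff ℝ ∞ (fderiv ℝ f) := ContDiff.fderiv_right hf (by simp)
  have hd : DifferentiableAt ℝ (fderiv ℝ f) z := (h.differentiable (by simp)) z
  have key : ∀ a b : E d × E d, D a (D b f) z = fderiv ℝ (fderiv ℝ f) z a b := by
    intro a b
    unfold D
    rw [fderiv_clm_apply hd (by fun_prop)]
    simp
  rw [key, key]
  have := (ContDiff.contDiffAt hf (x := z)).isSymmSndFDerivAt
    (by rw [minSmoothness_of_isRCLikeNormedField]; exact WithTop.coe_le_coe.2 le_top)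
  exact this w u

lemma fderiv_fst {d : ℕ} {f : E d × E d → ℝ} (hf : Sm f) (z : E d × E d) (a : E d) :
    fderiv ℝ (fun x => f (x, z.2)) z.1 a = D (a, 0) f z := by
  have h1 : HasFDerivAt (fun x : E d => (x, z.2)) (ContinuousLinearMap.inl ℝ (E d) (E d)) z.1 :=
    hasFDerivAt_prodMk_left z.1 z.2
  have h2 : HasFDerivAt f (fderiv ℝ f z) (z.1, z.2) := (hf.diff z).hasFDerivAt
  have := (h2.comp z.1 h1).fderiv
  unfold D
  change fderiv ℝ (f ∘ fun x => (x, z.2)) z.1 a = _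
  rw [this]; simp

lemma fderiv_snd {d : ℕ} {f : E d × E d → ℝ} (hf : Sm f) (z : E d × E d) (a : E d) :
    fderiv ℝ (fun x => f (z.1, x)) z.2 a = D (0, a) f z := by
  have h1 : HasFDerivAt (fun x : E d => (z.1, x)) (ContinuousLinearMap.inr ℝ (E d) (E d)) z.2 :=
    hasFDerivAt_prodMk_right z.1 z.2
  have h2 : HasFDerivAt f (fderiv ℝ f z) (z.1, z.2) := (hf.diff z).hasFDerivAt
  have := (h2.comp z.2 h1).fderiv
  unfold D
  change fderiv ℝ (f ∘ fun x => (z.1, x)) z.2 a = _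
  rw [this]; simp

lemma gradient_coord {d : ℕ} (g : E d → ℝ) (x : E d) (i : Fin d) :
    gradient g x i = fderiv ℝ g x (EuclideanSpace.single i 1) := by
  have : ⟪gradient g x, EuclideanSpace.single i (1:ℝ)⟫ = fderiv ℝ g x (EuclideanSpace.single i 1) := by
    simp only [gradient]
    exact InnerProductSpace.toDual_symm_apply
  rw [← this, EuclideanSpace.inner_single_right]; simp

lemma gradx_coord {d : ℕ} {f : E d × E d → ℝ} (hf : Sm f) (z : E d × E d) (i : Fin d) :
    gradx f z i = D (ex i) f z := by
  unfold gradx; rw [gradient_coord, fderiv_fst hf]; rfl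

lemma gradv_coord {d : ℕ} {f : E d × E d → ℝ} (hf : Sm f) (z : E d × E d) (i : Fin d) :
    gradv f z i = D (ev i) f z := by
  unfold gradv; rw [gradient_coord, fderiv_snd hf]; rfl

lemma lapv_eq {d : ℕ} {f : E d × E d → ℝ} (hf : Sm f) (z : E d × E d) :
    lapv f z = ∑ i, D (ev i) (D (ev i) f) z := by
  unfold lapv
  refine Finset.sum_congr rfl fun i _ => ?_
  have h : (fun v => fderiv ℝ (fun v' => f (z.1, v')) v (EuclideanSpace.single i 1))
      = fun v => D (ev i) f (z.1, v) := by
    funext v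
    exact fderiv_snd hf (z.1, v) _
  rw [h, fderiv_snd (hf.D _)]; rfl

lemma inner_eq {d : ℕ} (a b : E d) : ⟪a, b⟫ = ∑ i, a i * b i := by
  simp [PiLp.inner_apply, mul_comm]

/-- coordinate form of the generator -/
def L {d : ℕ} (U : E d → ℝ) (f : E d × E d → ℝ) (z : E d × E d) : ℝ :=
  ∑ i, (D (ev i) (D (ev i) f) z + z.2 i * D (ex i) f z - z.2 i * D (ev i) f z
    - gradient U z.1 i * D (ev i) f z)

lemma genL_eq {d : ℕ} (U : E d → ℝ) {f : E d × E d → ℝ} (hf : Sm f) :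
    genL U f = L U f := by
  funext z
  unfold genL L
  simp only [inner_eq, lapv_eq hf, gradx_coord hf, gradv_coord hf, Finset.sum_add_distrib,
    Finset.sum_sub_distrib]

lemma sm_coord {d : ℕ} (i : Fin d) : Sm (fun z : E d × E d => z.2 i) := by
  have : (fun z : E d × E d => z.2 i) = fun z => (EuclideanSpace.proj i : E d →L[ℝ] ℝ) z.2 := rfl
  unfold Sm
  rw [this]; fun_prop

lemma cd_gradient {d : ℕ} {U : E d → ℝ} (hU : ContDiff ℝ ∞ U) : ContDiff ℝ ∞ (gradient U) := by
  have h : ContDiff ℝ ∞ (fderiv ℝ U) := ContDiff.fderiv_right hU (by simp)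
  exact (InnerProductSpace.toDual ℝ (E d)).symm.contDiff.comp h

lemma sm_grad {d : ℕ} {U : E d → ℝ} (hU : ContDiff ℝ ∞ U) (i : Fin d) :
    Sm (fun z : E d × E d => gradient U z.1 i) := by
  have : (fun z : E d × E d => gradient U z.1 i)
    = fun z => (EuclideanSpace.proj i : E d →L[ℝ] ℝ) (gradient U z.1) := rfl
  unfold Sm
  rw [this]
  exact (EuclideanSpace.proj i : E d →L[ℝ] ℝ).contDiff.comp ((cd_gradient hU).comp contDiff_fst)

lemma D_coord {d : ℕ} (i : Fin d) (w z : E d × E d) :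
    D w (fun z : E d × E d => z.2 i) z = w.2 i := by
  have : (fun z : E d × E d => z.2 i) = ((EuclideanSpace.proj i : E d →L[ℝ] ℝ).comp
    (ContinuousLinearMap.snd ℝ (E d) (E d)) : E d × E d → ℝ) := rfl
  unfold D
  rw [this, ContinuousLinearMap.fderiv]; rfl

lemma D_grad {d : ℕ} {U : E d → ℝ} (hU : ContDiff ℝ ∞ U) (i : Fin d) (w z : E d × E d) :
    D w (fun z : E d × E d => gradient U z.1 i) z = (fderiv ℝ (gradient U) z.1 w.1) i := by
  have h1 : HasFDerivAt (gradient U) (fderiv ℝ (gradient U) z.1) z.1 :=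
    ((cd_gradient hU).differentiable (by simp) z.1).hasFDerivAt
  have h2 := h1.comp z (hasFDerivAt_fst (𝕜 := ℝ) (p := z))
  have h3 := (EuclideanSpace.proj i : E d →L[ℝ] ℝ).hasFDerivAt.comp z h2
  unfold D
  have h4 := h3.fderiv
  have h5 := congrArg (fun T => T w) h4
  exact h5

lemma sm_term {d : ℕ} {U : E d → ℝ} (hU : ContDiff ℝ ∞ U) {f : E d × E d → ℝ} (hf : Sm f)
    (i : Fin d) : Sm (fun z => D (ev i) (D (ev i) f) z + z.2 i * D (ex i) f z
      - z.2 i * D (ev i) f z - gradient U z.1 i * D (ev i) f z) :=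
  ((((hf.D _).D _).add ((sm_coord i).mul (hf.D _))).sub ((sm_coord i).mul (hf.D _))).sub
    ((sm_grad hU i).mul (hf.D _))

lemma sm_L {d : ℕ} {U : E d → ℝ} (hU : ContDiff ℝ ∞ U) {f : E d × E d → ℝ} (hf : Sm f) :
    Sm (L U f) := ContDiff.sum fun i _ => sm_term hU hf i

lemma D_L {d : ℕ} {U : E d → ℝ} (hU : ContDiff ℝ ∞ U) {f : E d × E d → ℝ} (hf : Sm f)
    (w z : E d × E d) : D w (L U f) z = L U (D w f) z +
      ∑ i, (w.2 i * D (ex i) f z - w.2 i * D (ev i) f z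
        - (fderiv ℝ (gradient U) z.1 w.1) i * D (ev i) f z) := by
  have h : L U f = fun z => ∑ i, (D (ev i) (D (ev i) f) z + z.2 i * D (ex i) f z
      - z.2 i * D (ev i) f z - gradient U z.1 i * D (ev i) f z) := rfl
  rw [h, D_sum (fun i => sm_term hU hf i)]
  unfold L
  rw [← Finset.sum_add_distrib]
  refine Finset.sum_congr rfl fun i _ => ?_
  rw [D_sub ((((hf.D _).D _).add ((sm_coord i).mul (hf.D _))).sub ((sm_coord i).mul (hf.D _)))
    ((sm_grad hU i).mul (hf.D _)),
    D_sub (((hf.D _).D _).add ((sm_coord i).mul (hf.D _))) ((sm_coord i).mul (hf.D _)),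
    D_add ((hf.D _).D _) ((sm_coord i).mul (hf.D _)),
    D_mul (sm_coord i) (hf.D _), D_mul (sm_coord i) (hf.D _), D_mul (sm_grad hU i) (hf.D _),
    D_coord, D_grad hU, D_comm (hf.D _) w, D_comm hf w, D_comm hf w]
  have : D w (D (ev i) f) = D (ev i) (D w f) := funext fun z => D_comm hf _ _ z
  rw [this]; ring

lemma L_add {d : ℕ} (U : E d → ℝ) {f g : E d × E d → ℝ} (hf : Sm f) (hg : Sm g)
    (z : E d × E d) : L U (fun z => f z + g z) z = L U f z + L U g z := by
  unfold L
  rw [← Finset.sum_add_distrib]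
  refine Finset.sum_congr rfl fun i _ => ?_
  have h : ∀ w, D w (fun z => f z + g z) = fun z => D w f z + D w g z :=
    fun w => funext fun z => D_add hf hg w z
  simp only [h]
  rw [D_add (hf.D _) (hg.D _)]; ring

lemma L_cmul {d : ℕ} (U : E d → ℝ) {f : E d × E d → ℝ} (hf : Sm f) (c : ℝ)
    (z : E d × E d) : L U (fun z => c * f z) z = c * L U f z := by
  unfold L
  rw [Finset.mul_sum]
  refine Finset.sum_congr rfl fun i _ => ?_
  have h : ∀ w, D w (fun z => c * f z) = fun z => c * D w f z :=
    fun w => funext fun z => D_cmul hf c w z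
  simp only [h]
  rw [D_cmul (hf.D _)]; ring

lemma L_mul {d : ℕ} (U : E d → ℝ) {f g : E d × E d → ℝ} (hf : Sm f) (hg : Sm g)
    (z : E d × E d) : L U (fun z => f z * g z) z = f z * L U g z + g z * L U f z
      + 2 * ∑ k, D (ev k) f z * D (ev k) g z := by
  unfold L
  simp only [Finset.mul_sum]
  rw [← Finset.sum_add_distrib, ← Finset.sum_add_distrib]
  refine Finset.sum_congr rfl fun i _ => ?_
  have h : ∀ w, D w (fun z => f z * g z) = fun z => f z * D w g z + g z * D w f z :=
    fun w => funext fun z => D_mul hf hg w z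
  simp only [h]
  rw [D_add (hf.mul (hg.D _)) (hg.mul (hf.D _)), D_mul hf (hg.D _), D_mul hg (hf.D _)]; ring

lemma L_sum {d : ℕ} (U : E d → ℝ) {F : Fin d → E d × E d → ℝ} (hF : ∀ i, Sm (F i))
    (z : E d × E d) : L U (fun z => ∑ i, F i z) z = ∑ i, L U (F i) z := by
  unfold L
  rw [Finset.sum_comm]
  refine Finset.sum_congr rfl fun i _ => ?_
  have h : ∀ w, D w (fun z => ∑ i, F i z) = fun z => ∑ i, D w (F i) z :=
    fun w => funext fun z => D_sum hF w z
  simp only [h]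
  rw [D_sum (fun j => (hF j).D _)]
  simp only [Finset.sum_add_distrib, Finset.sum_sub_distrib, Finset.mul_sum]

lemma carreT_eq {d : ℕ} (M : ℝ) {f g : E d × E d → ℝ} (hf : Sm f) (hg : Sm g) (z : E d × E d) :
    carreT M f g z = (∑ i, (2 * (D (ex i) f z * D (ex i) g z) + (-1) * (D (ex i) f z * D (ev i) g z)
      + (-1) * (D (ev i) f z * D (ex i) g z) + 2 * (D (ev i) f z * D (ev i) g z)))
      + (15 + 8 * M ^ 2 + 2 * M) * (f z * g z) := by
  unfold carreT carre
  simp only [inner_eq, gradx_coord hf, gradv_coord hf, gradx_coord hg, gradv_coord hg,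
    Finset.sum_add_distrib, ← Finset.mul_sum]
  ring

/-- smoothness of the summands -/
lemma sm_summand {d : ℕ} {f : E d × E d → ℝ} (hf : Sm f) (c : ℝ) (a b : E d × E d) :
    Sm (fun z => c * (D a f z * D b f z)) := contDiff_const.mul ((hf.D a).mul (hf.D b))

lemma L_summand {d : ℕ} (U : E d → ℝ) {f : E d × E d → ℝ} (hf : Sm f) (c : ℝ)
    (a b z : E d × E d) : L U (fun z => c * (D a f z * D b f z)) z =
      c * (D a f z * L U (D b f) z + D b f z * L U (D a f) z
      + 2 * ∑ k, D (ev k) (D a f) z * D (ev k) (D b f) z) := by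
  rw [L_cmul U ((hf.D a).mul (hf.D b)), L_mul U (hf.D a) (hf.D b)]

lemma D_L_ex {d : ℕ} {U : E d → ℝ} (hU : ContDiff ℝ ∞ U) {f : E d × E d → ℝ} (hf : Sm f)
    (k : Fin d) (z : E d × E d) : D (ex k) (L U f) z = L U (D (ex k) f) z -
      ⟪fderiv ℝ (gradient U) z.1 (EuclideanSpace.single k 1), gradv f z⟫ := by
  rw [D_L hU hf, inner_eq]
  simp [ex, gradv_coord hf, sub_eq_add_neg]

lemma D_L_ev {d : ℕ} {U : E d → ℝ} (hU : ContDiff ℝ ∞ U) {f : E d × E d → ℝ} (hf : Sm f)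
    (k : Fin d) (z : E d × E d) : D (ev k) (L U f) z = L U (D (ev k) f) z +
      (D (ex k) f z - D (ev k) f z) := by
  rw [D_L hU hf]
  congr 1
  simp only [Finset.sum_sub_distrib]
  simp [ev, PiLp.single_apply]

lemma sum_clm_inner {d : ℕ} (A : E d →L[ℝ] E d) (p q : E d) :
    ∑ k, p k * ⟪A (EuclideanSpace.single k 1), q⟫ = ⟪A p, q⟫ := by
  conv_rhs => rw [show p = ∑ k, p k • EuclideanSpace.single k (1:ℝ) by
    ext j; simp [Pi.single_apply]]
  simp [_root_.sum_inner, inner_smul_left]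

/-- The exact formula and lower bound. -/
lemma key {d : ℕ} {U : E d → ℝ} (hU : ContDiff ℝ ∞ U) (M : ℝ) {f : E d × E d → ℝ} (hf : Sm f)
    (z : E d × E d) : genL U (carreT M f f) z - 2 * carreT M f (genL U f) z ≥
      2 * ⟪gradx f z, gradx f z⟫ - 6 * ⟪gradx f z, gradv f z⟫
       + (4 + 2 * (15 + 8 * M ^ 2 + 2 * M)) * ⟪gradv f z, gradv f z⟫
       + 4 * ⟪fderiv ℝ (gradient U) z.1 (gradx f z), gradv f z⟫
       - 2 * ⟪fderiv ℝ (gradient U) z.1 (gradv f z), gradv f z⟫ := by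
  have e1 : carreT M f f = fun z => (∑ i, (2 * (D (ex i) f z * D (ex i) f z)
      + (-1) * (D (ex i) f z * D (ev i) f z)
      + (-1) * (D (ev i) f z * D (ex i) f z) + 2 * (D (ev i) f z * D (ev i) f z)))
      + (15 + 8 * M ^ 2 + 2 * M) * (f z * f z) := funext fun z => carreT_eq M hf hf z
  have s3 : ∀ i : Fin d, Sm (fun z => 2 * (D (ex i) f z * D (ex i) f z)
      + (-1) * (D (ex i) f z * D (ev i) f z)) :=
    fun i => (sm_summand hf _ _ _).add (sm_summand hf _ _ _)
  have s2 : ∀ i : Fin d, Sm (fun z => 2 * (D (ex i) f z * D (ex i) f z)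
      + (-1) * (D (ex i) f z * D (ev i) f z) + (-1) * (D (ev i) f z * D (ex i) f z)) :=
    fun i => (s3 i).add (sm_summand hf _ _ _)
  have s1 : ∀ i : Fin d, Sm (fun z => 2 * (D (ex i) f z * D (ex i) f z)
      + (-1) * (D (ex i) f z * D (ev i) f z) + (-1) * (D (ev i) f z * D (ex i) f z)
      + 2 * (D (ev i) f z * D (ev i) f z)) :=
    fun i => (s2 i).add (sm_summand hf _ _ _)
  have s0 : Sm (fun z => ∑ i, (2 * (D (ex i) f z * D (ex i) f z)
      + (-1) * (D (ex i) f z * D (ev i) f z) + (-1) * (D (ev i) f z * D (ex i) f z)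
      + 2 * (D (ev i) f z * D (ev i) f z))) := ContDiff.sum fun i _ => s1 i
  have sf : Sm (fun z => (15 + 8 * M ^ 2 + 2 * M) * (f z * f z)) :=
    contDiff_const.mul (hf.mul hf)
  have sT : Sm (carreT M f f) := by rw [e1]; exact s0.add sf
  rw [genL_eq U sT, genL_eq U hf, carreT_eq M hf (sm_L hU hf), e1, L_add U s0 sf, L_sum U s1,
    L_cmul U (hf.mul hf), L_mul U hf hf]
  have hL : ∀ i : Fin d, L U (fun z => 2 * (D (ex i) f z * D (ex i) f z)
      + (-1) * (D (ex i) f z * D (ev i) f z) + (-1) * (D (ev i) f z * D (ex i) f z)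
      + 2 * (D (ev i) f z * D (ev i) f z)) z
      - 2 * (2 * (D (ex i) f z * D (ex i) (L U f) z) + (-1) * (D (ex i) f z * D (ev i) (L U f) z)
      + (-1) * (D (ev i) f z * D (ex i) (L U f) z) + 2 * (D (ev i) f z * D (ev i) (L U f) z))
      ≥ 2 * (gradx f z i * gradx f z i) - 6 * (gradx f z i * gradv f z i)
       + 4 * (gradv f z i * gradv f z i)
       + 4 * (gradx f z i * ⟪fderiv ℝ (gradient U) z.1 (EuclideanSpace.single i 1), gradv f z⟫)
       - 2 * (gradv f z i * ⟪fderiv ℝ (gradient U) z.1 (EuclideanSpace.single i 1), gradv f z⟫) := by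
    intro i
    rw [L_add U (s2 i) (sm_summand hf _ _ _), L_add U (s3 i) (sm_summand hf _ _ _),
      L_add U (sm_summand hf _ _ _) (sm_summand hf _ _ _)]
    simp only [L_summand U hf, D_L_ex hU hf, D_L_ev hU hf]
    rw [gradx_coord hf, gradv_coord hf]
    have hpos : 0 ≤ ∑ k, (2 * (D (ev k) (D (ex i) f) z * D (ev k) (D (ex i) f) z)
      - (D (ev k) (D (ex i) f) z * D (ev k) (D (ev i) f) z)
      - (D (ev k) (D (ev i) f) z * D (ev k) (D (ex i) f) z)
      + 2 * (D (ev k) (D (ev i) f) z * D (ev k) (D (ev i) f) z)) :=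
      Finset.sum_nonneg fun k _ => by
        nlinarith [sq_nonneg (D (ev k) (D (ex i) f) z - D (ev k) (D (ev i) f) z),
          sq_nonneg (D (ev k) (D (ex i) f) z), sq_nonneg (D (ev k) (D (ev i) f) z)]
    simp only [Finset.sum_add_distrib, Finset.sum_sub_distrib, ← Finset.mul_sum] at hpos
    linarith
  have hS := Finset.sum_le_sum (s := Finset.univ) fun i _ => hL i
  simp only [Finset.sum_add_distrib, Finset.sum_sub_distrib, ← Finset.mul_sum, sum_clm_inner] at hS
  simp only [← inner_eq] at hS
  have hq : ∑ k, D (ev k) f z * D (ev k) f z = ⟪gradv f z, gradv f z⟫ := by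
    rw [inner_eq]; simp only [gradv_coord hf]
  rw [hq]
  simp only [Finset.sum_add_distrib, ← Finset.mul_sum]
  linarith

end KFP

/-- with `C_M = 15 + 8M² + 2M` and `Γ̃(f,g) = Γ(f,g) + C_M f g`, for every smooth
`f` one has the pointwise inequality `L Γ̃(f) − 2 Γ̃(f, L f) ≥ (1/3)(Γ̃(f) − C_M f²)`. -/
theorem carreT_gamma2_lower_bound {d : ℕ} (hd : 1 ≤ d)
    (U : EuclideanSpace ℝ (Fin d) → ℝ) (hU : ContDiff ℝ (⊤ : ℕ∞) U)
    (M : ℝ) (hM : 0 < M)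
    (hHess : ∀ x : EuclideanSpace ℝ (Fin d), ‖fderiv ℝ (gradient U) x‖ ≤ M)
    (f : EuclideanSpace ℝ (Fin d) × EuclideanSpace ℝ (Fin d) → ℝ)
    (hf : ContDiff ℝ (⊤ : ℕ∞) f)
    (z : EuclideanSpace ℝ (Fin d) × EuclideanSpace ℝ (Fin d)) :
    genL U (carreT M f f) z - 2 * carreT M f (genL U f) z ≥
      (1 / 3) * (carreT M f f z - (15 + 8 * M ^ 2 + 2 * M) * (f z) ^ 2) := by
  have hf' : KFP.Sm f := hf
  have k := KFP.key hU M hf' z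
  refine le_trans ?_ k
  clear k
  unfold carreT carre
  have hH := hHess z.1
  set p := gradx f z
  set q := gradv f z
  set A := fderiv ℝ (gradient U) z.1
  have b : ∀ u : EuclideanSpace ℝ (Fin d), |⟪A u, q⟫| ≤ M * ‖u‖ * ‖q‖ := fun u =>
    (abs_real_inner_le_norm _ _).trans
      (mul_le_mul_of_nonneg_right (A.le_of_opNorm_le hH u) (norm_nonneg _))
  have b1 := (abs_le.1 (b p)).1
  have b2 := (abs_le.1 (b q)).2
  have b3 := (abs_le.1 (abs_real_inner_le_norm p q)).2
  rw [real_inner_comm p q, real_inner_self_eq_norm_sq, real_inner_self_eq_norm_sq]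
  have n1 := sq_nonneg (‖p‖ - 4 * M * ‖q‖)
  have n2 := sq_nonneg (‖p‖ - 4 * ‖q‖)
  have n3 := sq_nonneg ‖p‖
  have n4 := sq_nonneg ‖q‖
  nlinarith

end
end

section
/- Let z ∈ ℝ^n and 0 < R < ‖z‖. Then every C¹ path γ : [0,1] → ℝ^n with γ(0) = z and ‖γ(1)‖ ≤ R satisfies ∫₀¹ L(γ(t)) ‖γ'(t)‖ dt ≥ C ∫_R^{‖z‖} e^{m r²} dr. In particular the ρ_L-distance from z to the closed ball of radius R centred at the origin is at least C ∫_R^{‖z‖} e^{m r²} dr. -/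
noncomputable section

/-- The weighted path metric `ρ_L(z₁, z₂)`: the infimum over all `C¹` paths
`γ : [0,1] → ℝ^n` from `z₁` to `z₂` of `∫₀¹ L(γ(t)) ‖γ'(t)‖ dt`. -/
def rho {n : ℕ} (L : EuclideanSpace ℝ (Fin n) → ℝ)
    (z₁ z₂ : EuclideanSpace ℝ (Fin n)) : ℝ :=
  sInf { c : ℝ | ∃ γ : ℝ → EuclideanSpace ℝ (Fin n),
    ContDiff ℝ 1 γ ∧ γ 0 = z₁ ∧ γ 1 = z₂ ∧
    c = ∫ t in (0:ℝ)..1, L (γ t) * ‖deriv γ t‖ }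

/-- if `L(z) ≥ C e^{m‖z‖²}`, `0 < R < ‖z‖`, then every `C¹` path from `z` to the
closed ball of radius `R` has weighted length at least `C ∫_R^{‖z‖} e^{m r²} dr`; in particular
the `ρ_L`-distance from `z` to that ball is at least `C ∫_R^{‖z‖} e^{m r²} dr`. -/
theorem rho_dist_to_ball_lower_bound {n : ℕ} (hn : 1 ≤ n)
    (L : EuclideanSpace ℝ (Fin n) → ℝ) (hLcont : Continuous L)
    (hL1 : ∀ z, 1 ≤ L z)
    (C m : ℝ) (hC : 0 < C) (hm : 0 < m)
    (hLlow : ∀ z, C * Real.exp (m * ‖z‖ ^ 2) ≤ L z)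
    (z : EuclideanSpace ℝ (Fin n)) (R : ℝ) (hR : 0 < R) (hRz : R < ‖z‖) :
    (∀ γ : ℝ → EuclideanSpace ℝ (Fin n), ContDiff ℝ 1 γ → γ 0 = z → ‖γ 1‖ ≤ R →
        C * (∫ r in R..‖z‖, Real.exp (m * r ^ 2)) ≤
          ∫ t in (0:ℝ)..1, L (γ t) * ‖deriv γ t‖) ∧
      (∀ w : EuclideanSpace ℝ (Fin n), ‖w‖ ≤ R →
        C * (∫ r in R..‖z‖, Real.exp (m * r ^ 2)) ≤ rho L z w) := by
  have key : ∀ γ : ℝ → EuclideanSpace ℝ (Fin n), ContDiff ℝ 1 γ → γ 0 = z → ‖γ 1‖ ≤ R →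
        C * (∫ r in R..‖z‖, Real.exp (m * r ^ 2)) ≤
          ∫ t in (0:ℝ)..1, L (γ t) * ‖deriv γ t‖ := by
    intro γ hγ h0 h1
    have hγc : Continuous γ := hγ.continuous
    have hdc : Continuous (deriv γ) := hγ.continuous_deriv le_rfl
    have hφ : Continuous fun t => L (γ t) * ‖deriv γ t‖ :=
      (hLcont.comp hγc).mul hdc.norm
    have hφ0 : ∀ t, 0 ≤ L (γ t) * ‖deriv γ t‖ := fun t =>
      mul_nonneg (zero_le_one.trans (hL1 _)) (norm_nonneg _)
    -- first hitting time of the closed ball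
    let S : Set ℝ := Set.Icc 0 1 ∩ {t | ‖γ t‖ ≤ R}
    have hSc : IsCompact S :=
      isCompact_Icc.inter_right (isClosed_le hγc.norm continuous_const)
    have hSn : S.Nonempty := ⟨1, ⟨zero_le_one, le_rfl⟩, h1⟩
    obtain ⟨T, ⟨⟨hT0, hT1⟩, hTR⟩, hTmin⟩ := hSc.exists_isLeast hSn
    have hbig : ∀ t ∈ Set.Ioo 0 T, R < ‖γ t‖ := by
      intro t ht
      by_contra hcon
      exact absurd (hTmin ⟨⟨ht.1.le, ht.2.le.trans hT1⟩, not_lt.mp hcon⟩) (not_le.mpr ht.2)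
    have hec : Continuous fun r : ℝ => Real.exp (m * r ^ 2) := by fun_prop
    have hG : ∀ s, HasDerivAt (fun s => ∫ r in R..s, Real.exp (m * r ^ 2))
        (Real.exp (m * s ^ 2)) s := fun s => hec.integral_hasStrictDerivAt R s |>.hasDerivAt
    have hGc : Continuous (fun s => ∫ r in R..s, Real.exp (m * r ^ 2)) :=
      continuous_iff_continuousAt.mpr fun s => (hG s).continuousAt
    have hN : ∀ t ∈ Set.Ioo 0 T, ∃ v, HasDerivAt (fun t => ‖γ t‖) v t ∧ |v| ≤ ‖deriv γ t‖ := by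
      intro t ht
      have hpos : 0 < ‖γ t‖ := hR.trans (hbig t ht)
      have hd : HasDerivAt γ (deriv γ t) t := (hγ.differentiable one_ne_zero t).hasDerivAt
      have h2 := hd.norm_sq.sqrt (by positivity)
      simp only [Real.sqrt_sq (norm_nonneg _)] at h2
      refine ⟨_, h2, ?_⟩
      rw [mul_div_mul_left _ _ two_ne_zero, abs_div, abs_of_pos hpos, div_le_iff₀ hpos, mul_comm]
      exact abs_real_inner_le_norm _ _
    choose! v hv hvb using hN
    have hmain := intervalIntegral.sub_le_integral_of_hasDeriv_right_of_le hT0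
      (g := fun t => -(C * ∫ r in R..‖γ t‖, Real.exp (m * r ^ 2)))
      (g' := fun t => -(C * (Real.exp (m * ‖γ t‖ ^ 2) * v t)))
      (φ := fun t => L (γ t) * ‖deriv γ t‖)
      ((continuous_const.mul (hGc.comp hγc.norm)).neg.continuousOn)
      (fun t ht => ((((hG _).comp t (hv t ht)).const_mul C).neg).hasDerivWithinAt)
      (hφ.integrableOn_Icc)
      (fun t ht => by
        have h3 : -v t ≤ ‖deriv γ t‖ := (neg_le_abs _).trans (hvb t ht)
        have h4 : C * Real.exp (m * ‖γ t‖ ^ 2) * (-v t) ≤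
            C * Real.exp (m * ‖γ t‖ ^ 2) * ‖deriv γ t‖ :=
          mul_le_mul_of_nonneg_left h3 (by positivity)
        have h5 := mul_le_mul_of_nonneg_right (hLlow (γ t)) (norm_nonneg (deriv γ t))
        linarith)
    have hend : ∫ r in R..‖γ T‖, Real.exp (m * r ^ 2) ≤ 0 := by
      rw [intervalIntegral.integral_symm]
      exact neg_nonpos.mpr (intervalIntegral.integral_nonneg hTR fun _ _ => (Real.exp_pos _).le)
    have hadd := intervalIntegral.integral_add_adjacent_intervals
      (hφ.intervalIntegrable (μ := MeasureTheory.volume) 0 T) (hφ.intervalIntegrable T 1)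
    have hrest : 0 ≤ ∫ t in T..1, L (γ t) * ‖deriv γ t‖ :=
      intervalIntegral.integral_nonneg hT1 fun t _ => hφ0 t
    have hCe := mul_nonpos_of_nonneg_of_nonpos hC.le hend
    simp only [h0] at hmain
    linarith
  refine ⟨key, fun w hw => ?_⟩
  unfold rho
  apply le_csInf
  · refine ⟨_, fun t => z + t • (w - z), by fun_prop, by simp, by simp, rfl⟩
  · rintro c ⟨γ, hγ, h0, h1, rfl⟩
    exact key γ hγ h0 (h1 ▸ hw)

end
end
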